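/- arXiv:1607.00923 — 7 statements merged into one kernel-verified Lean document; each statement's English description precedes it below -/
import Mathlib

section
/- Let u, v, p : ℝ³ → ℝ be functions of (t,x,y), with u twice continuously differentiable and v, p continuously differentiable, and assume p is C² so that ∂_y∂_x p exists. Assume that at every point: (incompressibility) ∂_x u + ∂_y v = 0; (momentum balance) ∂_t u + u ∂_x u + v ∂_y u = −∂_x p; and (hydrostatic pressure gradient) ∂_y(∂_x p) = 0. Then the vertical shear w := ∂_y u satisfies the transport equation ∂_t w + u ∂_x w + v ∂_y w = 0 at every point. -/
/-- Partial derivative in the first coordinate (time) of a function on ℝ³. -/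
noncomputable def pt3 (f : ℝ × ℝ × ℝ → ℝ) (q : ℝ × ℝ × ℝ) : ℝ :=
  deriv (fun s => f (s, q.2.1, q.2.2)) q.1

/-- Partial derivative in the second coordinate (horizontal) of a function on ℝ³. -/
noncomputable def px3 (f : ℝ × ℝ × ℝ → ℝ) (q : ℝ × ℝ × ℝ) : ℝ :=
  deriv (fun s => f (q.1, s, q.2.2)) q.2.1

/-- Partial derivative in the third coordinate (vertical) of a function on ℝ³. -/
noncomputable def py3 (f : ℝ × ℝ × ℝ → ℝ) (q : ℝ × ℝ × ℝ) : ℝ :=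
  deriv (fun s => f (q.1, q.2.1, s)) q.2.2

theorem pt3_eq {f : ℝ × ℝ × ℝ → ℝ} (hf : Differentiable ℝ f) :
    pt3 f = fun q => fderiv ℝ f q (1, 0, 0) := by
  funext q
  have h : HasDerivAt (fun s : ℝ => (s, q.2.1, q.2.2)) ((1, 0, 0) : ℝ × ℝ × ℝ) q.1 :=
    (hasDerivAt_id q.1).prodMk ((hasDerivAt_const _ _).prodMk (hasDerivAt_const _ _))
  exact ((hf q).hasFDerivAt.comp_hasDerivAt q.1 h).deriv

theorem px3_eq {f : ℝ × ℝ × ℝ → ℝ} (hf : Differentiable ℝ f) :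
    px3 f = fun q => fderiv ℝ f q (0, 1, 0) := by
  funext q
  have h : HasDerivAt (fun s : ℝ => (q.1, s, q.2.2)) ((0, 1, 0) : ℝ × ℝ × ℝ) q.2.1 :=
    (hasDerivAt_const _ _).prodMk ((hasDerivAt_id q.2.1).prodMk (hasDerivAt_const _ _))
  exact ((hf q).hasFDerivAt.comp_hasDerivAt q.2.1 h).deriv

theorem py3_eq {f : ℝ × ℝ × ℝ → ℝ} (hf : Differentiable ℝ f) :
    py3 f = fun q => fderiv ℝ f q (0, 0, 1) := by
  funext q
  have h : HasDerivAt (fun s : ℝ => (q.1, q.2.1, s)) ((0, 0, 1) : ℝ × ℝ × ℝ) q.2.2 :=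
    (hasDerivAt_const _ _).prodMk ((hasDerivAt_const _ _).prodMk (hasDerivAt_id q.2.2))
  exact ((hf q).hasFDerivAt.comp_hasDerivAt q.2.2 h).deriv

theorem diff_fderiv_apply {f : ℝ × ℝ × ℝ → ℝ} (hf : ContDiff ℝ 2 f) (e : ℝ × ℝ × ℝ) :
    Differentiable ℝ (fun q => fderiv ℝ f q e) := by
  have h : ContDiff ℝ 1 (fderiv ℝ f) := hf.fderiv_right (by norm_num)
  exact (h.differentiable one_ne_zero).clm_apply (differentiable_const e)

theorem fderiv_fderiv_apply {f : ℝ × ℝ × ℝ → ℝ} (hf : ContDiff ℝ 2 f) (e d q : ℝ × ℝ × ℝ) :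
    fderiv ℝ (fun q => fderiv ℝ f q e) q d = fderiv ℝ (fderiv ℝ f) q d e := by
  have h : ContDiff ℝ 1 (fderiv ℝ f) := hf.fderiv_right (by norm_num)
  have h2 := ((h.differentiable one_ne_zero q).hasFDerivAt.clm_apply (hasFDerivAt_const e q)).fderiv
  rw [h2]
  simp

theorem fderiv_swap {f : ℝ × ℝ × ℝ → ℝ} (hf : ContDiff ℝ 2 f) (e d q : ℝ × ℝ × ℝ) :
    fderiv ℝ (fun q => fderiv ℝ f q e) q d = fderiv ℝ (fun q => fderiv ℝ f q d) q e := by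
  rw [fderiv_fderiv_apply hf, fderiv_fderiv_apply hf]
  exact (hf.contDiffAt.isSymmSndFDerivAt (by simp)) d e

/-- For the hydrostatic Euler (long-wave) equations, the vertical shear
`w = ∂_y u` satisfies the transport equation `∂_t w + u ∂_x w + v ∂_y w = 0`. -/
theorem shear_transport
    (u v p : ℝ × ℝ × ℝ → ℝ)
    (hu : ContDiff ℝ 2 u) (hv : ContDiff ℝ 1 v) (hp : ContDiff ℝ 2 p)
    (hincomp : ∀ q : ℝ × ℝ × ℝ, px3 u q + py3 v q = 0)
    (hmom : ∀ q : ℝ × ℝ × ℝ,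
      pt3 u q + u q * px3 u q + v q * py3 u q = - px3 p q)
    (hpress : ∀ q : ℝ × ℝ × ℝ, py3 (px3 p) q = 0) :
    ∀ q : ℝ × ℝ × ℝ,
      pt3 (py3 u) q + u q * px3 (py3 u) q + v q * py3 (py3 u) q = 0 := by
  have du : Differentiable ℝ u := hu.differentiable two_ne_zero
  have dv : Differentiable ℝ v := hv.differentiable one_ne_zero
  have dp : Differentiable ℝ p := hp.differentiable two_ne_zero
  have dA := diff_fderiv_apply hu (1, 0, 0)
  have dB := diff_fderiv_apply hu (0, 1, 0)
  have dC := diff_fderiv_apply hu (0, 0, 1)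
  have dP := diff_fderiv_apply hp (0, 1, 0)
  rw [px3_eq dp] at hpress hmom
  rw [py3_eq dP] at hpress
  rw [px3_eq du, py3_eq dv] at hincomp
  rw [pt3_eq du, px3_eq du, py3_eq du] at hmom
  rw [py3_eq du, pt3_eq dC, px3_eq dC, py3_eq dC]
  intro q
  have key := ((dA q).hasFDerivAt.add ((du q).hasFDerivAt.mul (dB q).hasFDerivAt)).add
    ((dv q).hasFDerivAt.mul (dC q).hasFDerivAt)
  have key2 := (dP q).hasFDerivAt.neg
  have e := key.unique (key2.congr_of_eventuallyEq (Filter.Eventually.of_forall hmom))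
  have e2 := congrArg (fun L : ℝ × ℝ × ℝ →L[ℝ] ℝ => L (0, 0, 1)) e
  have h1 := hpress q
  have h2 := hincomp q
  simp only [ContinuousLinearMap.add_apply, ContinuousLinearMap.smul_apply,
    ContinuousLinearMap.neg_apply, smul_eq_mul] at e2
  rw [fderiv_swap hu (1, 0, 0) (0, 0, 1), fderiv_swap hu (0, 1, 0) (0, 0, 1)] at e2
  beta_reduce at h1 h2 ⊢
  linear_combination e2 - fderiv ℝ u q (0, 0, 1) * h2 - h1
end

section
/- Let u, v, p : ℝ³ → ℝ be as above (u C², v, p C¹, p C², with ∂_x u + ∂_y v = 0, ∂_t u + u ∂_x u + v ∂_y u = −∂_x p and ∂_y(∂_x p) = 0 everywhere). Let x, y : ℝ → ℝ be C¹ functions satisfying the characteristic ODEs x′(t) = u(t, x(t), y(t)) and y′(t) = v(t, x(t), y(t)) for all t. Then the function t ↦ ∂_y u(t, x(t), y(t)) is constant. In particular, if the vertical shear ∂_y u vanishes at one point of such a characteristic curve, it vanishes along the whole curve. -/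
lemma pt3_eq_fderiv {f : ℝ × ℝ × ℝ → ℝ} (hf : Differentiable ℝ f) (q : ℝ × ℝ × ℝ) :
    pt3 f q = fderiv ℝ f q (1, 0, 0) := by
  have hc : HasDerivAt (fun s : ℝ => ((s, q.2.1, q.2.2) : ℝ × ℝ × ℝ)) (1, 0, 0) q.1 :=
    (hasDerivAt_id _).prodMk ((hasDerivAt_const _ _).prodMk (hasDerivAt_const _ _))
  exact ((hf q).hasFDerivAt.comp_hasDerivAt q.1 hc).deriv

lemma px3_eq_fderiv {f : ℝ × ℝ × ℝ → ℝ} (hf : Differentiable ℝ f) (q : ℝ × ℝ × ℝ) :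
    px3 f q = fderiv ℝ f q (0, 1, 0) := by
  have hc : HasDerivAt (fun s : ℝ => ((q.1, s, q.2.2) : ℝ × ℝ × ℝ)) (0, 1, 0) q.2.1 :=
    (hasDerivAt_const _ _).prodMk ((hasDerivAt_id _).prodMk (hasDerivAt_const _ _))
  exact ((hf q).hasFDerivAt.comp_hasDerivAt q.2.1 hc).deriv

lemma hasDerivAt_vert (q : ℝ × ℝ × ℝ) :
    HasDerivAt (fun s : ℝ => ((q.1, q.2.1, s) : ℝ × ℝ × ℝ)) (0, 0, 1) q.2.2 :=
  (hasDerivAt_const _ _).prodMk ((hasDerivAt_const _ _).prodMk (hasDerivAt_id _))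

lemma py3_eq_fderiv {f : ℝ × ℝ × ℝ → ℝ} (hf : Differentiable ℝ f) (q : ℝ × ℝ × ℝ) :
    py3 f q = fderiv ℝ f q (0, 0, 1) :=
  ((hf q).hasFDerivAt.comp_hasDerivAt q.2.2 (hasDerivAt_vert q)).deriv

/-- For the hydrostatic Euler (long-wave) equations, the vertical shear
`∂_y u` is constant along characteristic curves `x' = u, y' = v`; in
particular if it vanishes at one point of the curve it vanishes on the
whole curve. -/
theorem shear_constant_along_characteristics
    (u v p : ℝ × ℝ × ℝ → ℝ)
    (hu : ContDiff ℝ 2 u) (hv : ContDiff ℝ 1 v) (hp : ContDiff ℝ 2 p)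
    (hincomp : ∀ q : ℝ × ℝ × ℝ, px3 u q + py3 v q = 0)
    (hmom : ∀ q : ℝ × ℝ × ℝ,
      pt3 u q + u q * px3 u q + v q * py3 u q = - px3 p q)
    (hpress : ∀ q : ℝ × ℝ × ℝ, py3 (px3 p) q = 0)
    (x y : ℝ → ℝ) (hx : ContDiff ℝ 1 x) (hy : ContDiff ℝ 1 y)
    (hxode : ∀ t : ℝ, deriv x t = u (t, x t, y t))
    (hyode : ∀ t : ℝ, deriv y t = v (t, x t, y t)) :
    (∀ s t : ℝ, py3 u (s, x s, y s) = py3 u (t, x t, y t)) ∧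
    (∀ t₀ : ℝ, py3 u (t₀, x t₀, y t₀) = 0 → ∀ t : ℝ, py3 u (t, x t, y t) = 0) := by
  have hud : Differentiable ℝ u := hu.differentiable (by norm_num)
  have hvd : Differentiable ℝ v := hv.differentiable (by norm_num)
  have hDu : Differentiable ℝ (fderiv ℝ u) :=
    (hu.fderiv_right (m := 1) (by norm_num)).differentiable (by norm_num)
  -- the differentiated momentum equation
  have key : ∀ q : ℝ × ℝ × ℝ,
      fderiv ℝ (fderiv ℝ u) q (1, u q, v q) (0, 0, 1) = 0 := by
    intro q
    have hD : ∀ e : ℝ × ℝ × ℝ, HasDerivAt (fun s : ℝ => fderiv ℝ u (q.1, q.2.1, s) e)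
        (fderiv ℝ (fderiv ℝ u) q (0, 0, 1) e) q.2.2 := by
      intro e
      have h1 : HasDerivAt (fun s : ℝ => fderiv ℝ u (q.1, q.2.1, s))
          (fderiv ℝ (fderiv ℝ u) q (0, 0, 1)) q.2.2 :=
        (hDu q).hasFDerivAt.comp_hasDerivAt q.2.2 (hasDerivAt_vert q)
      simpa using h1.clm_apply (hasDerivAt_const q.2.2 e)
    have hU : HasDerivAt (fun s : ℝ => u (q.1, q.2.1, s)) (fderiv ℝ u q (0, 0, 1)) q.2.2 :=
      (hud q).hasFDerivAt.comp_hasDerivAt q.2.2 (hasDerivAt_vert q)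
    have hV : HasDerivAt (fun s : ℝ => v (q.1, q.2.1, s)) (fderiv ℝ v q (0, 0, 1)) q.2.2 :=
      (hvd q).hasFDerivAt.comp_hasDerivAt q.2.2 (hasDerivAt_vert q)
    have hL := ((hD (1, 0, 0)).add (hU.mul (hD (0, 1, 0)))).add (hV.mul (hD (0, 0, 1)))
    have hR : deriv (fun s : ℝ => - px3 p (q.1, q.2.1, s)) q.2.2 = 0 := by
      rw [deriv.fun_neg, neg_eq_zero]
      exact hpress q
    have hE : (fun s : ℝ => - px3 p (q.1, q.2.1, s)) =
        (fun s : ℝ => fderiv ℝ u (q.1, q.2.1, s) (1, 0, 0)) +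
        (fun s : ℝ => u (q.1, q.2.1, s)) * (fun s : ℝ => fderiv ℝ u (q.1, q.2.1, s) (0, 1, 0)) +
        (fun s : ℝ => v (q.1, q.2.1, s)) *
          (fun s : ℝ => fderiv ℝ u (q.1, q.2.1, s) (0, 0, 1)) := by
      funext s
      have := hmom (q.1, q.2.1, s)
      rw [pt3_eq_fderiv hud, px3_eq_fderiv hud, py3_eq_fderiv hud] at this
      exact this.symm
    rw [hE, hL.deriv] at hR
    have hi := hincomp q
    rw [px3_eq_fderiv hud, py3_eq_fderiv hvd] at hi
    have hsym : IsSymmSndFDerivAt ℝ u q := hu.contDiffAt.isSymmSndFDerivAt (by simp)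
    rw [hsym.eq]
    have hdec : ((1, u q, v q) : ℝ × ℝ × ℝ) =
        (1, 0, 0) + u q • ((0, 1, 0) : ℝ × ℝ × ℝ) + v q • ((0, 0, 1) : ℝ × ℝ × ℝ) := by
      simp
    rw [hdec, map_add, map_add, map_smul, map_smul, smul_eq_mul, smul_eq_mul]
    simp only [Prod.mk.eta] at hR
    linear_combination hR - fderiv ℝ u q (0, 0, 1) * hi
  have hder : ∀ t : ℝ, HasDerivAt (fun t => py3 u (t, x t, y t)) 0 t := by
    intro t
    have hxt : HasDerivAt x (u (t, x t, y t)) t := by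
      rw [← hxode]; exact (hx.differentiable (by norm_num) t).hasDerivAt
    have hyt : HasDerivAt y (v (t, x t, y t)) t := by
      rw [← hyode]; exact (hy.differentiable (by norm_num) t).hasDerivAt
    have hc : HasDerivAt (fun t : ℝ => ((t, x t, y t) : ℝ × ℝ × ℝ))
        (1, u (t, x t, y t), v (t, x t, y t)) t :=
      (hasDerivAt_id t).prodMk (hxt.prodMk hyt)
    have h1 : HasDerivAt (fun t : ℝ => fderiv ℝ u (t, x t, y t))
        (fderiv ℝ (fderiv ℝ u) (t, x t, y t) (1, u (t, x t, y t), v (t, x t, y t))) t :=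
      (hDu (t, x t, y t)).hasFDerivAt.comp_hasDerivAt t hc
    have h2 := h1.clm_apply (hasDerivAt_const t ((0, 0, 1) : ℝ × ℝ × ℝ))
    rw [key, map_zero, add_zero] at h2
    simpa only [py3_eq_fderiv hud] using h2
  have hconst : ∀ s t : ℝ, py3 u (s, x s, y s) = py3 u (t, x t, y t) := fun s t =>
    is_const_of_deriv_eq_zero (fun t => (hder t).differentiableAt) (fun t => (hder t).deriv) s t
  exact ⟨hconst, fun t₀ h t => (hconst t t₀).trans h⟩
end

section
/- Let δ̄ ∈ ℝ and let h, U, u_e, p, δ₁, δ₂, J, τ̄_b : ℝ² → ℝ (functions of (t,x)) be differentiable. Assume at every point: (i) ideal fluid momentum ∂_t u_e + u_e ∂_x u_e = −∂_x p; (ii) mass conservation ∂_t h + ∂_x(hU) = 0; (iii) momentum conservation ∂_t(hU) + ∂_x J = −h ∂_x p − δ̄ τ̄_b; (iv) displacement-thickness relation hU = (h − δ̄ δ₁) u_e; and (v) the von Kármán equation ∂_t(u_e δ₁) + u_e δ₁ ∂_x u_e + ∂_x(u_e² δ₂) = τ̄_b. Then ∂_x(J − h U u_e + δ̄ δ₂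 u_e²) = 0 at every point; in particular, if J vanishes wherever the velocities vanish, J = h U u_e − δ̄ δ₂ u_e² = (h − δ̄(δ₁ + δ₂)) u_e². -/
/-- Partial derivative in the first coordinate (time) of a function on ℝ². -/
noncomputable def pt2 (f : ℝ × ℝ → ℝ) (q : ℝ × ℝ) : ℝ :=
  deriv (fun s => f (s, q.2)) q.1

/-- Partial derivative in the second coordinate (space) of a function on ℝ². -/
noncomputable def px2 (f : ℝ × ℝ → ℝ) (q : ℝ × ℝ) : ℝ :=
  deriv (fun s => f (q.1, s)) q.2

/-- If the shallow water equations, the ideal-fluid momentum equation, the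
displacement-thickness relation and the von Kármán equation hold, then the
momentum flux satisfies `∂_x(J − hUu_e + δ̄δ₂u_e²) = 0`; in particular, if `J`
vanishes wherever the velocities vanish, `J = hUu_e − δ̄δ₂u_e²
= (h − δ̄(δ₁+δ₂))u_e²`. -/
theorem momentum_flux_closure
    (δb : ℝ) (h U ue p δ₁ δ₂ J τb : ℝ × ℝ → ℝ)
    (hdh : Differentiable ℝ h) (hdU : Differentiable ℝ U)
    (hdue : Differentiable ℝ ue) (hdp : Differentiable ℝ p)
    (hdδ₁ : Differentiable ℝ δ₁) (hdδ₂ : Differentiable ℝ δ₂)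
    (hdJ : Differentiable ℝ J) (hdτ : Differentiable ℝ τb)
    -- (i) ideal fluid momentum
    (hEuler : ∀ q : ℝ × ℝ, pt2 ue q + ue q * px2 ue q = - px2 p q)
    -- (ii) mass conservation
    (hmass : ∀ q : ℝ × ℝ, pt2 h q + px2 (fun q => h q * U q) q = 0)
    -- (iii) momentum conservation
    (hmom : ∀ q : ℝ × ℝ,
      pt2 (fun q => h q * U q) q + px2 J q = - h q * px2 p q - δb * τb q)
    -- (iv) displacement-thickness relation
    (hdisp : ∀ q : ℝ × ℝ, h q * U q = (h q - δb * δ₁ q) * ue q)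
    -- (v) von Kármán equation
    (hVK : ∀ q : ℝ × ℝ,
      pt2 (fun q => ue q * δ₁ q) q + ue q * δ₁ q * px2 ue q
        + px2 (fun q => (ue q) ^ 2 * δ₂ q) q = τb q) :
    (∀ q : ℝ × ℝ,
      px2 (fun q => J q - h q * U q * ue q + δb * δ₂ q * (ue q) ^ 2) q = 0) ∧
    (∀ t : ℝ, (∃ x : ℝ, U (t, x) = 0 ∧ ue (t, x) = 0 ∧ J (t, x) = 0) →
      ∀ x : ℝ,
        J (t, x) = h (t, x) * U (t, x) * ue (t, x) - δb * δ₂ (t, x) * (ue (t, x)) ^ 2 ∧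
        J (t, x) = (h (t, x) - δb * (δ₁ (t, x) + δ₂ (t, x))) * (ue (t, x)) ^ 2) := by
  have ct : ∀ (f : ℝ × ℝ → ℝ), Differentiable ℝ f → ∀ q : ℝ × ℝ,
      HasDerivAt (fun s => f (s, q.2)) (pt2 f q) q.1 := by
    intro f hf q
    have : Differentiable ℝ (fun s : ℝ => f (s, q.2)) := by fun_prop
    exact (this q.1).hasDerivAt
  have cx : ∀ (f : ℝ × ℝ → ℝ), Differentiable ℝ f → ∀ q : ℝ × ℝ,
      HasDerivAt (fun s => f (q.1, s)) (px2 f q) q.2 := by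
    intro f hf q
    have : Differentiable ℝ (fun s : ℝ => f (q.1, s)) := by fun_prop
    exact (this q.2).hasDerivAt
  have key : ∀ q : ℝ × ℝ,
      px2 (fun q => J q - h q * U q * ue q + δb * δ₂ q * (ue q) ^ 2) q = 0 := by
    intro q
    have e1 : pt2 (fun q => h q * U q) q
        = pt2 h q * ue q + h q * pt2 ue q - δb * pt2 (fun q => ue q * δ₁ q) q := by
      have hfun : (fun q => h q * U q) = fun q => h q * ue q - δb * (ue q * δ₁ q) := by
        funext q
        rw [hdisp q]
        ring
      rw [hfun]
      exact (((ct h hdh q).mul (ct ue hdue q)).sub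
        ((ct (fun q => ue q * δ₁ q) (by fun_prop) q).const_mul δb)).deriv
    have e2 : px2 (fun q => J q - h q * U q * ue q + δb * δ₂ q * (ue q) ^ 2) q
        = px2 J q - (px2 (fun q => h q * U q) q * ue q + h q * U q * px2 ue q)
          + δb * px2 (fun q => (ue q) ^ 2 * δ₂ q) q := by
      have hfun : (fun q => J q - h q * U q * ue q + δb * δ₂ q * (ue q) ^ 2)
          = fun q => J q - h q * U q * ue q + δb * ((ue q) ^ 2 * δ₂ q) := by
        funext q
        ring
      rw [hfun]
      exact (((cx J hdJ q).sub ((cx (fun q => h q * U q) (by fun_prop) q).mul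
        (cx ue hdue q))).add
        ((cx (fun q => (ue q) ^ 2 * δ₂ q) (by fun_prop) q).const_mul δb)).deriv
    rw [e2]
    have h3 := hmom q
    rw [e1] at h3
    linear_combination h3 - h q * hEuler q - ue q * hmass q + δb * hVK q
      - px2 ue q * hdisp q
  refine ⟨key, ?_⟩
  rintro t ⟨x₀, hU0, hue0, hJ0⟩ x
  have hd : Differentiable ℝ (fun s : ℝ => J (t, s) - h (t, s) * U (t, s) * ue (t, s)
      + δb * δ₂ (t, s) * (ue (t, s)) ^ 2) := by fun_prop
  have hc := is_const_of_deriv_eq_zero hd (fun s => key (t, s)) x x₀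
  simp only [hU0, hue0, hJ0] at hc
  have h4 := hdisp (t, x)
  constructor
  · linear_combination hc
  · linear_combination hc + ue (t, x) * h4
end

section
/- Let δ̄ ≠ 0 and let h, U, u_e, p, δ₁, δ₂, τ̄_b : ℝ² → ℝ (functions of (t,x)) be differentiable. Assume at every point: (i) ideal fluid momentum ∂_t u_e + u_e ∂_x u_e = −∂_x p; (ii) mass conservation ∂_t h + ∂_x(hU) = 0; (iii) momentum conservation with closed flux ∂_t(hU) + ∂_x((h − δ̄(δ₁ + δ₂)) u_e²) = −h ∂_x p − δ̄ τ̄_b; and (iv) displacement-thickness relation hU = (h − δ̄ δ₁) u_e. Then δ₁ and δ₂ satisfy the von Kármán equation ∂_t(u_e δ₁) + u_e δ₁ ∂_x u_e + ∂_x(u_e² δ₂) = τ̄_b at every point. -/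
/-- Conversely, if the shallow water equations hold with the closed momentum
flux `J = (h − δ̄(δ₁+δ₂))u_e²` together with the ideal-fluid momentum equation
and the displacement-thickness relation, then `δ₁` and `δ₂` satisfy the von
Kármán equation. -/
theorem vonKarman_from_closed_flux
    (δb : ℝ) (hδb : δb ≠ 0) (h U ue p δ₁ δ₂ τb : ℝ × ℝ → ℝ)
    (hdh : Differentiable ℝ h) (hdU : Differentiable ℝ U)
    (hdue : Differentiable ℝ ue) (hdp : Differentiable ℝ p)
    (hdδ₁ : Differentiable ℝ δ₁) (hdδ₂ : Differentiable ℝ δ₂)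
    (hdτ : Differentiable ℝ τb)
    -- (i) ideal fluid momentum
    (hEuler : ∀ q : ℝ × ℝ, pt2 ue q + ue q * px2 ue q = - px2 p q)
    -- (ii) mass conservation
    (hmass : ∀ q : ℝ × ℝ, pt2 h q + px2 (fun q => h q * U q) q = 0)
    -- (iii) momentum conservation with closed flux
    (hmom : ∀ q : ℝ × ℝ,
      pt2 (fun q => h q * U q) q
        + px2 (fun q => (h q - δb * (δ₁ q + δ₂ q)) * (ue q) ^ 2) q
      = - h q * px2 p q - δb * τb q)
    -- (iv) displacement-thickness relation
    (hdisp : ∀ q : ℝ × ℝ, h q * U q = (h q - δb * δ₁ q) * ue q) :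
    ∀ q : ℝ × ℝ,
      pt2 (fun q => ue q * δ₁ q) q + ue q * δ₁ q * px2 ue q
        + px2 (fun q => (ue q) ^ 2 * δ₂ q) q = τb q := by
  intro q
  have hU : (fun q => h q * U q) = fun q => (h q - δb * δ₁ q) * ue q := funext hdisp
  have ht : ∀ f : ℝ × ℝ → ℝ, Differentiable ℝ f →
      HasDerivAt (fun s => f (s, q.2)) (pt2 f q) q.1 := by
    intro f hf
    have : Differentiable ℝ (fun s : ℝ => f (s, q.2)) := by fun_prop
    exact (this q.1).hasDerivAt
  have hx : ∀ f : ℝ × ℝ → ℝ, Differentiable ℝ f →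
      HasDerivAt (fun s => f (q.1, s)) (px2 f q) q.2 := by
    intro f hf
    have : Differentiable ℝ (fun s : ℝ => f (q.1, s)) := by fun_prop
    exact (this q.2).hasDerivAt
  have e1 := hEuler q
  have e2 := hmass q
  have e3 := hmom q
  rw [hU] at e2 e3
  have a1 : px2 (fun q => (h q - δb * δ₁ q) * ue q) q = _ :=
    (((hx h hdh).sub ((hx δ₁ hdδ₁).const_mul δb)).mul (hx ue hdue)).deriv
  have a2 : pt2 (fun q => (h q - δb * δ₁ q) * ue q) q = _ :=
    (((ht h hdh).sub ((ht δ₁ hdδ₁).const_mul δb)).mul (ht ue hdue)).deriv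
  have a3 : px2 (fun q => (h q - δb * (δ₁ q + δ₂ q)) * (ue q) ^ 2) q = _ :=
    (((hx h hdh).sub (((hx δ₁ hdδ₁).add (hx δ₂ hdδ₂)).const_mul δb)).mul
      ((hx ue hdue).pow 2)).deriv
  have a4 : pt2 (fun q => ue q * δ₁ q) q = _ := ((ht ue hdue).mul (ht δ₁ hdδ₁)).deriv
  have a5 : px2 (fun q => (ue q) ^ 2 * δ₂ q) q = _ :=
    (((hx ue hdue).pow 2).mul (hx δ₂ hdδ₂)).deriv
  rw [a1] at e2
  rw [a2, a3] at e3
  rw [a4, a5]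
  simp only [Pi.sub_apply, Pi.add_apply, Pi.mul_apply, Pi.pow_apply, Prod.mk.eta] at e2 e3 ⊢
  apply mul_left_cancel₀ hδb
  push_cast at e3 ⊢
  linear_combination -e3 + h q * e1 + ue q * e2
end

section
/- Let δ̄ ≠ 0 and let h, U, u_e, p, δ₁, δ₂, δ₁*, τ̄_b : ℝ² → ℝ be differentiable functions of (t,x), with u_e never zero. Assume at every point: (i) ∂_t u_e + u_e ∂_x u_e = −∂_x p; (ii) ∂_t h + ∂_x(hU) = 0; (iii) ∂_t(hU) + ∂_x((h − δ̄(δ₁ + δ₂)) u_e²) = −h ∂_x p − δ̄ τ̄_b; (iv) the von Kármán equation ∂_t(u_e δ₁) + u_e δ₁ ∂_x u_e + ∂_x(u_e² δ₂) = τ̄_b holds for δ₁, δ₂; and (v) δ₁* is defined by the displacement-thickness relation hU = (h − δ̄ δ₁*) u_e. Then ∂_t(u_e (δ₁ − δ₁*)) − u_e ∂_x(u_e (δ₁ − δ₁*)) = 0 at every point; i.e. the discrepancy u_e(δ₁ − δ₁*) between the two definitions of the displacement thickness is transported along the characteristics of the ideal fluid. -/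
/-- If the extended shallow water system (with closed flux) and the von Kármán
equation hold for `δ₁, δ₂`, and `δ₁*` is defined by the displacement-thickness
relation `hU = (h − δ̄δ₁*)u_e`, then the discrepancy `u_e(δ₁ − δ₁*)` is
transported along the characteristics of the ideal fluid:
`∂_t(u_e(δ₁ − δ₁*)) − u_e ∂_x(u_e(δ₁ − δ₁*)) = 0`. -/
theorem displacement_discrepancy_transported
    (δb : ℝ) (hδb : δb ≠ 0) (h U ue p δ₁ δ₂ δ₁s τb : ℝ × ℝ → ℝ)
    (hdh : Differentiable ℝ h) (hdU : Differentiable ℝ U)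
    (hdue : Differentiable ℝ ue) (hdp : Differentiable ℝ p)
    (hdδ₁ : Differentiable ℝ δ₁) (hdδ₂ : Differentiable ℝ δ₂)
    (hdδ₁s : Differentiable ℝ δ₁s) (hdτ : Differentiable ℝ τb)
    (hue0 : ∀ q : ℝ × ℝ, ue q ≠ 0)
    -- (i) ideal fluid momentum
    (hEuler : ∀ q : ℝ × ℝ, pt2 ue q + ue q * px2 ue q = - px2 p q)
    -- (ii) mass conservation
    (hmass : ∀ q : ℝ × ℝ, pt2 h q + px2 (fun q => h q * U q) q = 0)
    -- (iii) momentum conservation with closed flux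
    (hmom : ∀ q : ℝ × ℝ,
      pt2 (fun q => h q * U q) q
        + px2 (fun q => (h q - δb * (δ₁ q + δ₂ q)) * (ue q) ^ 2) q
      = - h q * px2 p q - δb * τb q)
    -- (iv) von Kármán equation for δ₁, δ₂
    (hVK : ∀ q : ℝ × ℝ,
      pt2 (fun q => ue q * δ₁ q) q + ue q * δ₁ q * px2 ue q
        + px2 (fun q => (ue q) ^ 2 * δ₂ q) q = τb q)
    -- (v) displacement-thickness relation defining δ₁*
    (hdisp : ∀ q : ℝ × ℝ, h q * U q = (h q - δb * δ₁s q) * ue q) :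
    ∀ q : ℝ × ℝ,
      pt2 (fun q => ue q * (δ₁ q - δ₁s q)) q
        - ue q * px2 (fun q => ue q * (δ₁ q - δ₁s q)) q = 0 := by
  intro q
  have ht : ∀ f : ℝ × ℝ → ℝ, Differentiable ℝ f →
      HasDerivAt (fun s => f (s, q.2)) (pt2 f q) q.1 := by
    intro f hf
    have : Differentiable ℝ (fun s : ℝ => f (s, q.2)) := by fun_prop
    exact (this q.1).hasDerivAt
  have hx : ∀ f : ℝ × ℝ → ℝ, Differentiable ℝ f →
      HasDerivAt (fun s => f (q.1, s)) (px2 f q) q.2 := by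
    intro f hf
    have : Differentiable ℝ (fun s : ℝ => f (q.1, s)) := by fun_prop
    exact (this q.2).hasDerivAt
  have hfun : (fun q => h q * U q) = fun q => (h q - δb * δ₁s q) * ue q := funext hdisp
  have e1 := hEuler q
  have e2 := hmass q
  have e3 := hmom q
  have e4 := hVK q
  rw [hfun] at e2 e3
  have a1 : pt2 (fun q => (h q - δb * δ₁s q) * ue q) q = _ :=
    (((ht h hdh).sub ((ht δ₁s hdδ₁s).const_mul δb)).mul (ht ue hdue)).deriv
  have a2 : px2 (fun q => (h q - δb * δ₁s q) * ue q) q = _ :=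
    (((hx h hdh).sub ((hx δ₁s hdδ₁s).const_mul δb)).mul (hx ue hdue)).deriv
  have a3 : px2 (fun q => (h q - δb * (δ₁ q + δ₂ q)) * (ue q) ^ 2) q = _ :=
    (((hx h hdh).sub (((hx δ₁ hdδ₁).add (hx δ₂ hdδ₂)).const_mul δb)).mul
      ((hx ue hdue).pow 2)).deriv
  have a4 : pt2 (fun q => ue q * δ₁ q) q = _ := ((ht ue hdue).mul (ht δ₁ hdδ₁)).deriv
  have a5 : px2 (fun q => (ue q) ^ 2 * δ₂ q) q = _ :=
    (((hx ue hdue).pow 2).mul (hx δ₂ hdδ₂)).deriv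
  have a6 : pt2 (fun q => ue q * (δ₁ q - δ₁s q)) q = _ :=
    ((ht ue hdue).mul ((ht δ₁ hdδ₁).sub (ht δ₁s hdδ₁s))).deriv
  have a7 : px2 (fun q => ue q * (δ₁ q - δ₁s q)) q = _ :=
    ((hx ue hdue).mul ((hx δ₁ hdδ₁).sub (hx δ₁s hdδ₁s))).deriv
  rw [a2] at e2
  rw [a1, a3] at e3
  rw [a4, a5] at e4
  rw [a6, a7]
  simp only [Pi.sub_apply, Pi.add_apply, Pi.mul_apply, Pi.pow_apply, Prod.mk.eta] at e2 e3 e4 ⊢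
  norm_num at e2 e3 e4 ⊢
  apply mul_left_cancel₀ hδb
  linear_combination e3 - ue q * e2 + δb * e4 - h q * e1
end

section
/- Let Fr > 0, let f_b : ℝ → ℝ be differentiable, and let 𝓗, u_e, d : ℝ² → ℝ be differentiable functions of (t,x) satisfying at every point the apparent-topography equations: (i) ∂_t 𝓗 + ∂_x(𝓗 u_e) + ∂_t d = 0 and (ii) ∂_t(𝓗 u_e) + ∂_x(𝓗 u_e² + 𝓗²/(2Fr²)) + u_e ∂_t d = −(𝓗/Fr²)(f_b′ + ∂_x d). Then, with η := 𝓗 + f_b + d, the following energy balance holds at every point: ∂_t(𝓗 u_e²/2 + η²/(2Fr²)) + ∂_x( u_e (𝓗 u_e²/2 + 𝓗 η / Fr²) ) = −(u_e²/2) ∂_t d. -/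
/-- Energy balance for the apparent-topography formulation of the extended
shallow water model: the dissipation of mechanical energy is driven by the
time variation of the viscous-layer displacement `d = δ̄δ₁`. -/
theorem apparent_topography_energy_balance
    (Fr : ℝ) (hFr : 0 < Fr)
    (fb : ℝ → ℝ) (hfb : Differentiable ℝ fb)
    (H ue d : ℝ × ℝ → ℝ)
    (hdH : Differentiable ℝ H) (hdue : Differentiable ℝ ue)
    (hdd : Differentiable ℝ d)
    -- (i) mass conservation with apparent topography
    (hmass : ∀ q : ℝ × ℝ,
      pt2 H q + px2 (fun q => H q * ue q) q + pt2 d q = 0)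
    -- (ii) momentum conservation with apparent topography
    (hmom : ∀ q : ℝ × ℝ,
      pt2 (fun q => H q * ue q) q
        + px2 (fun q => H q * (ue q) ^ 2 + (H q) ^ 2 / (2 * Fr ^ 2)) q
        + ue q * pt2 d q
      = -(H q / Fr ^ 2) * (deriv fb q.2 + px2 d q)) :
    ∀ q : ℝ × ℝ,
      pt2 (fun q => H q * (ue q) ^ 2 / 2
          + (H q + fb q.2 + d q) ^ 2 / (2 * Fr ^ 2)) q
        + px2 (fun q => ue q * (H q * (ue q) ^ 2 / 2
          + H q * (H q + fb q.2 + d q) / Fr ^ 2)) q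
      = -((ue q) ^ 2 / 2) * pt2 d q := by
  intro q
  have hm := hmass q
  have hp := hmom q
  obtain ⟨t, x⟩ := q
  have hF : Fr ≠ 0 := hFr.ne'
  have ht : ∀ f : ℝ × ℝ → ℝ, Differentiable ℝ f →
      HasDerivAt (fun s => f (s, x)) (pt2 f (t, x)) t := by
    intro f hf
    have h : Differentiable ℝ (fun s : ℝ => f (s, x)) := by fun_prop
    exact (h t).hasDerivAt
  have hx : ∀ f : ℝ × ℝ → ℝ, Differentiable ℝ f →
      HasDerivAt (fun s => f (t, s)) (px2 f (t, x)) x := by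
    intro f hf
    have h : Differentiable ℝ (fun s : ℝ => f (t, s)) := by fun_prop
    exact (h x).hasDerivAt
  have Ht := ht H hdH
  have ut := ht ue hdue
  have dt := ht d hdd
  have Hx := hx H hdH
  have ux := hx ue hdue
  have dx := hx d hdd
  have bx := (hfb x).hasDerivAt
  have e1 : px2 (fun q => H q * ue q) (t, x) = _ := (Hx.mul ux).deriv
  have e2 : pt2 (fun q => H q * ue q) (t, x) = _ := (Ht.mul ut).deriv
  have e3 : px2 (fun q => H q * (ue q) ^ 2 + (H q) ^ 2 / (2 * Fr ^ 2)) (t, x) = _ :=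
    ((Hx.mul (ux.pow 2)).add ((Hx.pow 2).div_const (2 * Fr ^ 2))).deriv
  have e4 : pt2 (fun q => H q * (ue q) ^ 2 / 2
          + (H q + fb q.2 + d q) ^ 2 / (2 * Fr ^ 2)) (t, x) = _ :=
    (((Ht.mul (ut.pow 2)).div_const 2).add
      ((((Ht.add_const (fb x)).add dt).pow 2).div_const (2 * Fr ^ 2))).deriv
  have e5 : px2 (fun q => ue q * (H q * (ue q) ^ 2 / 2
          + H q * (H q + fb q.2 + d q) / Fr ^ 2)) (t, x) = _ :=
    (ux.mul (((Hx.mul (ux.pow 2)).div_const 2).add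
      ((Hx.mul ((Hx.add bx).add dx)).div_const (Fr ^ 2)))).deriv
  rw [e1] at hm
  rw [e2, e3] at hp
  rw [e4, e5]
  simp only [Pi.add_apply, Pi.mul_apply, Pi.pow_apply] at hm hp ⊢
  norm_num at hm hp ⊢
  linear_combination (ue (t, x)) * hp +
    ((H (t, x) + fb x + d (t, x)) / Fr ^ 2 - (ue (t, x)) ^ 2 / 2) * hm
end

section
/- Let u_e, b ∈ ℝ, h > 0 and Fr > 0, and define the cubic polynomial P_SW(λ) := (b − u_e − λ)((u_e − λ)² − h/Fr²) (which has leading coefficient −1 in λ). Then the derivative P_SW′ has exactly two distinct real roots λ₋ < λ₊, and for every real number d with P_SW(λ₋) < d < P_SW(λ₊), the equation P_SW(λ) = d has exactly three real solutions, all distinct. Consequently, under the condition P_SW(λ₋) < δ̄a/Fr² < P_SW(λ₊), the convective matrix of the extended shallow water system has three distinct real eigenvalues, i.e. the system is strictly hyperbolic. -/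
/-- The convective matrix of the Interactive Boundary Layer formulation of the
extended shallow water model in the variables `(h, u_e, δ₁u_e)`. -/
noncomputable def convMatrix (ue h a b δb Fr : ℝ) : Matrix (Fin 3) (Fin 3) ℝ :=
  Matrix.of ![![ue, h, -δb], ![(Fr ^ 2)⁻¹, ue, 0], ![0, a, b - ue]]

theorem cubic_three_roots (A B C d lm lp : ℝ) (P : ℝ → ℝ)
    (hP : ∀ x, P x = -x ^ 3 + A * x ^ 2 + B * x + C)
    (hA : 2 * A = 3 * (lm + lp)) (hB : B = -3 * (lm * lp))
    (hlt : lm < lp) (h1 : P lm < d) (h2 : d < P lp) :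
    ∃ l1 l2 l3 : ℝ, l1 < l2 ∧ l2 < l3 ∧
      ∀ lam : ℝ, P lam = d ↔ (lam = l1 ∨ lam = l2 ∨ lam = l3) := by
  have hA' : A = 3 * (lm + lp) / 2 := by linarith
  subst hA'
  subst hB
  have hc : Continuous P := by
    have : P = fun x => -x ^ 3 + 3 * (lm + lp) / 2 * x ^ 2 + -3 * (lm * lp) * x + C := funext hP
    rw [this]; fun_prop
  have e1 : P (lm - (lp - lm) / 2) = P lp := by simp only [hP]; ring
  have e2 : P (lp + (lp - lm) / 2) = P lm := by simp only [hP]; ring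
  obtain ⟨x, hx, hxd⟩ := intermediate_value_Ioo' (by linarith : lm - (lp - lm) / 2 ≤ lm)
    hc.continuousOn (show d ∈ Set.Ioo _ _ from ⟨h1, by rw [e1]; exact h2⟩)
  obtain ⟨y, hy, hyd⟩ := intermediate_value_Ioo hlt.le
    hc.continuousOn (show d ∈ Set.Ioo _ _ from ⟨h1, h2⟩)
  obtain ⟨z, hz, hzd⟩ := intermediate_value_Ioo' (by linarith : lp ≤ lp + (lp - lm) / 2)
    hc.continuousOn (show d ∈ Set.Ioo _ _ from ⟨by rw [e2]; exact h1, h2⟩)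
  have hxy : x < y := hx.2.trans hy.1
  have hyz : y < z := hy.2.trans hz.1
  refine ⟨x, y, z, hxy, hyz, fun t => ⟨fun ht => ?_, ?_⟩⟩
  · by_contra! hne
    obtain ⟨n1, n2, n3⟩ := hne
    rw [hP] at hxd hyd hzd ht
    generalize 3 * (lm + lp) / 2 = A at *
    generalize -3 * (lm * lp) = B at *
    have a1 : -(x ^ 2 + x * y + y ^ 2) + A * (x + y) + B = 0 := by
      apply mul_left_cancel₀ (sub_ne_zero.2 hxy.ne)
      linear_combination hxd - hyd
    have a2 : -(x ^ 2 + x * z + z ^ 2) + A * (x + z) + B = 0 := by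
      apply mul_left_cancel₀ (sub_ne_zero.2 (hxy.trans hyz).ne)
      linear_combination hxd - hzd
    have a3 : -(x ^ 2 + x * t + t ^ 2) + A * (x + t) + B = 0 := by
      apply mul_left_cancel₀ (sub_ne_zero.2 n1)
      linear_combination ht - hxd
    have b1 : -(x + y + z) + A = 0 := by
      apply mul_left_cancel₀ (sub_ne_zero.2 hyz.ne)
      linear_combination a1 - a2
    have b2 : -(x + y + t) + A = 0 := by
      apply mul_left_cancel₀ (sub_ne_zero.2 n2)
      linear_combination a3 - a1
    exact n3 (by linarith)
  · rintro (rfl | rfl | rfl) <;> assumption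

theorem eig_iff (ue h a b δb Fr lam : ℝ) :
    Module.End.HasEigenvalue (Matrix.toLin' (convMatrix ue h a b δb Fr)) lam ↔
      (b - ue - lam) * ((ue - lam) ^ 2 - h / Fr ^ 2) = δb * a / Fr ^ 2 := by
  rw [Module.End.hasEigenvalue_iff_isRoot_charpoly, Matrix.charpoly_toLin',
    Polynomial.IsRoot, Matrix.eval_charpoly, Matrix.det_fin_three]
  simp [convMatrix, Matrix.scalar_apply]
  constructor
  · intro H
    linear_combination -H
  · intro H
    linear_combination -H

/-- The cubic `P_SW(λ) = (b − u_e − λ)((u_e − λ)² − h/Fr²)` has a derivative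
with exactly two distinct real roots `λ₋ < λ₊`, and for every
`P_SW(λ₋) < d < P_SW(λ₊)` the equation `P_SW(λ) = d` has exactly three
distinct real solutions.  Consequently, under the condition
`P_SW(λ₋) < δ̄a/Fr² < P_SW(λ₊)` the convective matrix of the extended shallow
water system has three distinct real eigenvalues: the system is strictly
hyperbolic. -/
theorem conditional_strict_hyperbolicity
    (ue b h Fr : ℝ) (hh : 0 < h) (hFr : 0 < Fr)
    (P : ℝ → ℝ)
    (hP : P = fun lam => (b - ue - lam) * ((ue - lam) ^ 2 - h / Fr ^ 2)) :
    ∃ lm lp : ℝ, lm < lp ∧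
      (∀ x : ℝ, deriv P x = 0 ↔ (x = lm ∨ x = lp)) ∧
      (∀ d : ℝ, P lm < d → d < P lp →
        ∃ l1 l2 l3 : ℝ, l1 < l2 ∧ l2 < l3 ∧
          ∀ lam : ℝ, P lam = d ↔ (lam = l1 ∨ lam = l2 ∨ lam = l3)) ∧
      (∀ a δb : ℝ, P lm < δb * a / Fr ^ 2 → δb * a / Fr ^ 2 < P lp →
        ∃ l1 l2 l3 : ℝ, l1 < l2 ∧ l2 < l3 ∧
          ∀ lam : ℝ,
            Module.End.HasEigenvalue
                (Matrix.toLin' (convMatrix ue h a b δb Fr)) lam ↔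
              (lam = l1 ∨ lam = l2 ∨ lam = l3)) := by
  have hk : 0 < h / Fr ^ 2 := by positivity
  have heig := fun a δb lam => eig_iff ue h a b δb Fr lam
  generalize h / Fr ^ 2 = k at *
  have hs : 0 < Real.sqrt ((2 * ue - b) ^ 2 + 3 * k) := Real.sqrt_pos.2 (by positivity)
  have hs2 : Real.sqrt ((2 * ue - b) ^ 2 + 3 * k) ^ 2 = (2 * ue - b) ^ 2 + 3 * k :=
    Real.sq_sqrt (by positivity)
  generalize Real.sqrt ((2 * ue - b) ^ 2 + 3 * k) = s at *
  have hlt : (ue + b - s) / 3 < (ue + b + s) / 3 := by linarith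
  have key := fun d => cubic_three_roots (ue + b) (-(ue ^ 2 - k + 2 * (b - ue) * ue))
    ((b - ue) * (ue ^ 2 - k)) d ((ue + b - s) / 3) ((ue + b + s) / 3) P
    (fun x => by rw [hP]; ring) (by ring) (by linear_combination (-1 / 3) * hs2) hlt
  refine ⟨(ue + b - s) / 3, (ue + b + s) / 3, hlt, fun x => ?_, key, fun a δb h1 h2 => ?_⟩
  · have hd : HasDerivAt P ((0 - 1) * ((ue - x) ^ 2 - k)
        + (b - ue - x) * (2 * (ue - x) * (0 - 1))) x := by
      rw [hP]
      have g1 : HasDerivAt (fun y : ℝ => b - ue - y) (0 - 1) x :=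
        (hasDerivAt_const x (b - ue)).sub (hasDerivAt_id x)
      have g2 : HasDerivAt (fun y : ℝ => ue - y) (0 - 1) x :=
        (hasDerivAt_const x ue).sub (hasDerivAt_id x)
      have g3 := g1.mul ((g2.pow 2).sub_const k)
      refine HasDerivAt.congr_deriv (f := fun lam => (b - ue - lam) * ((ue - lam) ^ 2 - k)) g3 ?_
      simp
    rw [hd.deriv]
    have : (0 - 1) * ((ue - x) ^ 2 - k) + (b - ue - x) * (2 * (ue - x) * (0 - 1))
        = -3 * ((x - (ue + b - s) / 3) * (x - (ue + b + s) / 3)) := by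
      linear_combination (-1 / 3) * hs2
    rw [this]
    simp [sub_eq_zero]
  · obtain ⟨l1, l2, l3, h12, h23, H⟩ := key _ h1 h2
    refine ⟨l1, l2, l3, h12, h23, fun lam => ?_⟩
    rw [heig, ← H, hP]
end
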